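/- Let D be a union of q^t-orbits such that M = M(D) ≠ 0, and let H_M(k,b) be an involved hypercolumn in the computation of d*(M), with 1 ≤ k ≤ s and b ∈ Z_{r_k}. If P is a q^t-orbits hypermatrix with P < M and d*(P) < d*(M), then d*(H_P(k,b)) < d*(H_M(k,b)); consequently, H_P(k,b) < H_M(k,b) as q^{t·|C_{q^t}(b)|}-orbits hypermatrices, where C_{q^t}(b) is the q^t-cyclotomic coset of b modulo r_k. -/

import Mathlib

open Classical

noncomputable section

namespace AbelianCodes

/-- The index set `I = Z_{r 0} × ⋯ × Z_{r (s-1)}`. -/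
abbrev Idx {s : ℕ} (r : Fin s → ℕ) : Type := ∀ k, ZMod (r k)

variable {F : Type*} [Field F]

/-- The support of a hypermatrix. -/
def hsupp {s : ℕ} {r : Fin s → ℕ} (M : Idx r → F) : Set (Idx r) := {i | M i ≠ 0}

/-- The hypercolumn `H_M(k,b)` of a hypermatrix, viewed as an `(s-1)`-dimensional
hypermatrix indexed by `∏_{j ≠ k} Z_{r j}`. -/
def hypercol {s : ℕ} {r : Fin (s+1) → ℕ} (M : Idx r → F) (k : Fin (s+1)) (b : ZMod (r k)) :
    Idx (fun j => r (k.succAbove j)) → F :=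
  fun i => M (k.insertNth b i)

/-- `ω_M(k,b)`: the number of consecutive zero hypercolumns
`H_M(k,b+1), H_M(k,b+2), …` (indices modulo `r k`). -/
def runLen {s : ℕ} {r : Fin (s+1) → ℕ} (M : Idx r → F) (k : Fin (s+1)) (b : ZMod (r k)) : ℕ :=
  ((Finset.Ico 1 (r k)).filter
    (fun j => ∀ m : ℕ, m ∈ Finset.Icc 1 j → hypercol M k (b + (m : ZMod (r k))) = 0)).card

/-- The apparent distance `d*(M)` of a hypermatrix, defined recursively on the
number of variables.  (A `0`-dimensional hypermatrix is a scalar, of apparent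
distance `1` if nonzero and `0` otherwise; with this convention the `1`-dimensional
case becomes `max {ω_M(b)+1 : a_b ≠ 0}` and the higher-dimensional case becomes
`max_k max {(ω_M(k,b)+1)·d*(H_M(k,b)) : H_M(k,b) ≠ 0}`, since zero hypermatrices
have apparent distance `0`.) -/
def apd : {s : ℕ} → (r : Fin s → ℕ) → (Idx r → F) → ℕ
  | 0, _, M => if M finZeroElim = 0 then 0 else 1
  | _+1, r, M =>
      Finset.univ.sup fun k =>
        Finset.univ.sup fun b : Fin (r k) =>
          (runLen M k ((b : ℕ) : ZMod (r k)) + 1) *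
            apd (fun j => r (k.succAbove j)) (hypercol M k ((b : ℕ) : ZMod (r k)))

/-- The `q^t`-orbit `Q_t(a)` of `a ∈ I`. -/
def qOrbit {s : ℕ} (r : Fin s → ℕ) (q t : ℕ) (a : Idx r) : Set (Idx r) :=
  {i | ∃ n : ℕ, ∀ k, i k = (q : ZMod (r k)) ^ (t * n) * a k}

/-- `D` is a union of `q^t`-orbits. -/
def OrbitUnion {s : ℕ} (r : Fin s → ℕ) (q t : ℕ) (D : Set (Idx r)) : Prop :=
  ∀ a ∈ D, qOrbit r q t a ⊆ D

/-- The hypermatrix afforded by `D ⊆ I`: entry `0` at indices in `D`, entry `1` elsewhere. -/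
def afforded {s : ℕ} (r : Fin s → ℕ) (D : Set (Idx r)) : Idx r → F :=
  fun i => if i ∈ D then 0 else 1

/-- `M` is a `q^t`-orbits hypermatrix, i.e. the hypermatrix afforded by some union
of `q^t`-orbits. -/
def IsOrbitMx {s : ℕ} (r : Fin s → ℕ) (q t : ℕ) (M : Idx r → F) : Prop :=
  ∃ D : Set (Idx r), OrbitUnion r q t D ∧ M = afforded r D

/-- The minimum apparent distance `mad(M) = min {d*(P) : P a q^t-orbits hypermatrix,
`0 ≠ P ≤ M`}`, where `P ≤ M` means `supp P ⊆ supp M`. -/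
def mad {s : ℕ} (r : Fin s → ℕ) (q t : ℕ) (M : Idx r → F) : ℕ :=
  sInf {d | ∃ P : Idx r → F, IsOrbitMx r q t P ∧ P ≠ 0 ∧ hsupp P ⊆ hsupp M ∧ apd r P = d}

/-- The `q^t`-cyclotomic coset of `b` modulo `r`. -/
def cycCoset (r q t : ℕ) (b : ZMod r) : Set (ZMod r) :=
  {x | ∃ n : ℕ, x = (q : ZMod r) ^ (t * n) * b}

/-!
Shrinking the support of `M` can only lengthen the runs of zero hypercolumns, so `ω_M ≤ ω_P`. At an
involved pair `(k, b)` the chain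
`(ω_P(k,b) + 1) · d*(H_P(k,b)) ≤ d*(P) < d*(M) = (ω_M(k,b) + 1) · d*(H_M(k,b))`
then leaves the drop to the second factor. Since the apparent distance depends on the support alone,
this drop forces the supports of the two hypercolumns to differ.
-/

section Support

variable {s : ℕ}

lemma hsupp_eq_empty_iff {r : Fin s → ℕ} {M : Idx r → F} : hsupp M = ∅ ↔ M = 0 :=
  Function.support_eq_empty_iff

variable {r : Fin (s + 1) → ℕ} {M P : Idx r → F}

lemma hsupp_hypercol (M : Idx r → F) (k : Fin (s + 1)) (b : ZMod (r k)) :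
    hsupp (hypercol M k b) = k.insertNth b ⁻¹' hsupp M :=
  rfl

lemma hsupp_hypercol_subset (h : hsupp P ⊆ hsupp M) (k : Fin (s + 1)) (b : ZMod (r k)) :
    hsupp (hypercol P k b) ⊆ hsupp (hypercol M k b) :=
  Set.preimage_mono h

lemma hypercol_eq_zero_of_hsupp_subset (h : hsupp P ⊆ hsupp M) {k : Fin (s + 1)} {b : ZMod (r k)}
    (hM : hypercol M k b = 0) : hypercol P k b = 0 :=
  hsupp_eq_empty_iff.mp <|
    Set.subset_eq_empty (hsupp_hypercol_subset h k b) (hsupp_eq_empty_iff.mpr hM)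

lemma runLen_le_of_hsupp_subset (h : hsupp P ⊆ hsupp M) (k : Fin (s + 1)) (b : ZMod (r k)) :
    runLen M k b ≤ runLen P k b := by
  refine Finset.card_le_card fun j hj => ?_
  simp only [Finset.mem_filter] at hj ⊢
  exact ⟨hj.1, fun m hm => hypercol_eq_zero_of_hsupp_subset h (hj.2 m hm)⟩

lemma runLen_eq_of_hsupp_eq (h : hsupp P = hsupp M) (k : Fin (s + 1)) (b : ZMod (r k)) :
    runLen P k b = runLen M k b :=
  (runLen_le_of_hsupp_subset h.ge k b).antisymm (runLen_le_of_hsupp_subset h.le k b)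

end Support

section ApparentDistance

lemma apd_eq_of_hsupp_eq {s : ℕ} {r : Fin s → ℕ} {M P : Idx r → F} (h : hsupp P = hsupp M) :
    apd r P = apd r M := by
  induction s with
  | zero =>
    have hzero : P finZeroElim = 0 ↔ M finZeroElim = 0 :=
      not_iff_not.mp (Set.ext_iff.mp h finZeroElim)
    simp only [apd, hzero]
  | succ s ih =>
    have hcol (k : Fin (s + 1)) (b : ZMod (r k)) :
        apd _ (hypercol P k b) = apd _ (hypercol M k b) :=
      ih (by rw [hsupp_hypercol, hsupp_hypercol, h])
    simp only [apd, runLen_eq_of_hsupp_eq h, hcol]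

variable {s : ℕ} {r : Fin (s + 1) → ℕ} {k : Fin (s + 1)} [NeZero (r k)]

lemma runLen_succ_mul_apd_hypercol_le_apd (M : Idx r → F) (b : ZMod (r k)) :
    (runLen M k b + 1) * apd (fun j => r (k.succAbove j)) (hypercol M k b) ≤ apd r M := by
  obtain ⟨c, rfl⟩ : ∃ c : Fin (r k), ((c : ℕ) : ZMod (r k)) = b :=
    ⟨⟨b.val, b.val_lt⟩, ZMod.natCast_zmod_val b⟩
  rw [apd]
  exact Finset.le_sup_of_le (Finset.mem_univ k) <|
    Finset.le_sup_of_le (Finset.mem_univ c) le_rfl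

theorem apd_hypercol_lt_of_involved_general {M P : Idx r → F} {b : ZMod (r k)}
    (hinv : apd r M =
      (runLen M k b + 1) * apd (fun j => r (k.succAbove j)) (hypercol M k b))
    (hPM : hsupp P ⊆ hsupp M) (hPd : apd r P < apd r M) :
    apd (fun j => r (k.succAbove j)) (hypercol P k b) <
      apd (fun j => r (k.succAbove j)) (hypercol M k b) ∧
    hsupp (hypercol P k b) ⊂ hsupp (hypercol M k b) := by
  have hlt : apd _ (hypercol P k b) < apd _ (hypercol M k b) := by
    refine lt_of_mul_lt_mul_left (a := runLen M k b + 1) ?_ (Nat.zero_le _)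
    calc (runLen M k b + 1) * apd _ (hypercol P k b)
      _ ≤ (runLen P k b + 1) * apd _ (hypercol P k b) := by
        gcongr
        exact runLen_le_of_hsupp_subset hPM k b
      _ ≤ apd r P := runLen_succ_mul_apd_hypercol_le_apd P b
      _ < apd r M := hPd
      _ = (runLen M k b + 1) * apd _ (hypercol M k b) := hinv
  have hne : hsupp (hypercol P k b) ≠ hsupp (hypercol M k b) :=
    fun h => hlt.ne (apd_eq_of_hsupp_eq h)
  exact ⟨hlt, (hsupp_hypercol_subset hPM k b).ssubset_of_ne hne⟩

end ApparentDistance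

/-- Let `M = M(D) ≠ 0` be a `q^t`-orbits hypermatrix and let
`H_M(k,b)` be an involved hypercolumn in the computation of `d*(M)`.  If `P` is a
`q^t`-orbits hypermatrix with `P < M` and `d*(P) < d*(M)`, then
`d*(H_P(k,b)) < d*(H_M(k,b))`; consequently `H_P(k,b) < H_M(k,b)` as
`q^{t·|C_{q^t}(b)|}`-orbits hypermatrices. -/
theorem apd_hypercol_lt_of_involved
    {s : ℕ} (r : Fin (s+1) → ℕ)
    (p q t : ℕ) (hp : p.Prime) (hq : ∃ m : ℕ, 0 < m ∧ q = p ^ m) (ht : 0 < t)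
    (hr : ∀ k, 0 < r k) (hpr : ∀ k, ¬ p ∣ r k)
    {F : Type*} [Field F]
    (M : Idx r → F) (hM : IsOrbitMx r q t M) (hM0 : M ≠ 0)
    (k : Fin (s+1)) (b : ZMod (r k))
    (hcol : hypercol M k b ≠ 0)
    (hinv : apd r M =
      (runLen M k b + 1) * apd (fun j => r (k.succAbove j)) (hypercol M k b))
    (P : Idx r → F) (hP : IsOrbitMx r q t P)
    (hPM : hsupp P ⊂ hsupp M) (hPd : apd r P < apd r M) :
    apd (fun j => r (k.succAbove j)) (hypercol P k b) <
      apd (fun j => r (k.succAbove j)) (hypercol M k b) ∧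
    hsupp (hypercol P k b) ⊂ hsupp (hypercol M k b) := by
  have : NeZero (r k) := .of_pos (hr k)
  exact apd_hypercol_lt_of_involved_general hinv hPM.subset hPd

end AbelianCodes
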